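/- Fix an integer n ≥ 0 and real numbers α ≥ 0, γ ∈ ℝ, and P₁₁, P₁₂, P₂₂, Q₁₁, Q₁₂, Q₂₂ satisfying the n-th Neumann algebraic Riccati equations: 0 = −2n²π²P₁₂ + Q₁₁ − γ²P₁₂², 0 = P₁₁ − αP₁₂ − n²π²P₂₂ + Q₁₂ − γ²P₁₂P₂₂, and 0 = 2P₁₂ − 2αP₂₂ + Q₂₂ − γ²P₂₂². Define the matrix-valued kernels P(x₁,x₂) = [[P₁₁,P₁₂],[P₁₂,P₂₂]] cos(nπx₁) cos(nπx₂) and Q(x₁,x₂) = [[Q₁₁,Q₁₂],[Q₁₂,Q₂₂]] cos(nπx₁) cos(nπx₂) on [0,1]². Then ∂P/∂x₁ vanishes at x₁ ∈ {0,1}, ∂P/∂x₂ vanishes at x₂ ∈ {0,1}, and for all (x₁,x₂) ∈ [0,1]² the Neumann Riccati partial differential equations hold: (i) ∂²P₂₁/∂x₁² + ∂²P₁₂/∂x₂² + Q₁₁ = γ² P₁₂(x₁,1)·P₂₁(1,x₂); (ii) P₁₁ − αP₁₂ + ∂²P₂₂/∂x₁² + Q₁₂ = γ² P₁₂(x₁,1)·P₂₂(1,x₂);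 (iii) P₁₁ − αP₂₁ + ∂²P₂₂/∂x₂² + Q₂₁ = γ² P₂₂(x₁,1)·P₂₁(1,x₂); (iv) P₁₂ + P₂₁ − 2αP₂₂ + Q₂₂ = γ² P₂₂(x₁,1)·P₂₂(1,x₂), where all kernel entries are evaluated at (x₁,x₂) unless indicated otherwise and P₂₁ = P₁₂, Q₂₁ = Q₁₂. -/

import Mathlib

/-- The single-mode Neumann kernel `c · cos(nπx₁) · cos(nπx₂)`. -/
noncomputable def cosKer (c : ℝ) (n : ℕ) (x₁ x₂ : ℝ) : ℝ :=
  c * Real.cos ((n : ℝ) * Real.pi * x₁) * Real.cos ((n : ℝ) * Real.pi * x₂)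

/-!
The mode `cos (nπx)` is an eigenfunction of `∂²/∂x²` with eigenvalue `-n²π²` and has vanishing
derivative at the integers. Since `cos (nπ)² = 1`, the product of two boundary traces is again a
single-mode kernel. Hence each partial differential equation is the corresponding algebraic Riccati
equation multiplied by `cos (nπx₁) cos (nπx₂)`.
-/

theorem sin_natCast_mul_pi_mul_intCast (n : ℕ) (k : ℤ) : Real.sin (n * Real.pi * k) = 0 := by
  simpa [mul_right_comm] using Real.sin_int_mul_pi (n * k)

section CosKer

variable (c : ℝ) (n : ℕ) (x₁ x₂ : ℝ)

theorem cosKer_comm : cosKer c n x₁ x₂ = cosKer c n x₂ x₁ :=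
  mul_right_comm _ _ _

theorem hasDerivAt_cosKer_left :
    HasDerivAt (fun y => cosKer c n y x₂)
      (-(n * Real.pi) * (c * Real.sin (n * Real.pi * x₁) * Real.cos (n * Real.pi * x₂))) x₁ :=
  (((hasDerivAt_const_mul _).cos.const_mul c).mul_const _).congr_deriv (by ring)

theorem deriv_deriv_cosKer_left :
    deriv (deriv fun y => cosKer c n y x₂) x₁ = -(n * Real.pi) ^ 2 * cosKer c n x₁ x₂ := by
  have first_deriv : (deriv fun y => cosKer c n y x₂) = fun y =>
      -(n * Real.pi) * (c * Real.sin (n * Real.pi * y) * Real.cos (n * Real.pi * x₂)) :=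
    funext fun y => (hasDerivAt_cosKer_left c n y x₂).deriv
  have second_deriv : HasDerivAt
      (fun y => -(n * Real.pi) * (c * Real.sin (n * Real.pi * y) * Real.cos (n * Real.pi * x₂)))
      (-(n * Real.pi) ^ 2 * cosKer c n x₁ x₂) x₁ :=
    ((((hasDerivAt_const_mul _).sin.const_mul c).mul_const _).const_mul _).congr_deriv
      (by rw [cosKer]; ring)
  rw [first_deriv, second_deriv.deriv]

theorem deriv_deriv_cosKer_right :
    deriv (deriv fun y => cosKer c n x₁ y) x₂ = -(n * Real.pi) ^ 2 * cosKer c n x₁ x₂ := by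
  simpa only [cosKer_comm c n x₁] using deriv_deriv_cosKer_left c n x₂ x₁

theorem deriv_cosKer_left_intCast (k : ℤ) : deriv (fun y => cosKer c n y x₂) k = 0 := by
  simp [(hasDerivAt_cosKer_left c n k x₂).deriv, sin_natCast_mul_pi_mul_intCast]

theorem deriv_cosKer_right_intCast (k : ℤ) : deriv (fun y => cosKer c n x₁ y) k = 0 := by
  simpa only [cosKer_comm c n x₁] using deriv_cosKer_left_intCast c n x₁ k

theorem cosKer_intCast_mul_cosKer_intCast (a b : ℝ) (k : ℤ) :
    cosKer a n x₁ k * cosKer b n k x₂ = cosKer (a * b) n x₁ x₂ := by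
  have cos_sq_eq_one : Real.cos (n * Real.pi * k) ^ 2 = 1 := by
    simp [Real.cos_sq', sin_natCast_mul_pi_mul_intCast]
  simp only [cosKer]
  linear_combination
    a * b * Real.cos (n * Real.pi * x₁) * Real.cos (n * Real.pi * x₂) * cos_sq_eq_one

end CosKer

theorem neumann_riccati_pde_single_mode_general
    (n : ℕ) (α γ P11 P12 P22 Q11 Q12 Q22 : ℝ)
    (h1 : 0 = -2 * (n : ℝ) ^ 2 * Real.pi ^ 2 * P12 + Q11 - γ ^ 2 * P12 ^ 2)
    (h2 : 0 = P11 - α * P12 - (n : ℝ) ^ 2 * Real.pi ^ 2 * P22 + Q12 - γ ^ 2 * P12 * P22)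
    (h3 : 0 = 2 * P12 - 2 * α * P22 + Q22 - γ ^ 2 * P22 ^ 2) :
    (∀ c x₁ x₂ : ℝ,
      ((x₁ = 0 ∨ x₁ = 1) → deriv (fun y => cosKer c n y x₂) x₁ = 0) ∧
      ((x₂ = 0 ∨ x₂ = 1) → deriv (fun y => cosKer c n x₁ y) x₂ = 0)) ∧
    (∀ x₁ x₂ : ℝ,
      (deriv (deriv (fun y => cosKer P12 n y x₂)) x₁ +
          deriv (deriv (fun y => cosKer P12 n x₁ y)) x₂ + cosKer Q11 n x₁ x₂ =
        γ ^ 2 * cosKer P12 n x₁ 1 * cosKer P12 n 1 x₂) ∧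
      (cosKer P11 n x₁ x₂ - α * cosKer P12 n x₁ x₂ +
          deriv (deriv (fun y => cosKer P22 n y x₂)) x₁ + cosKer Q12 n x₁ x₂ =
        γ ^ 2 * cosKer P12 n x₁ 1 * cosKer P22 n 1 x₂) ∧
      (cosKer P11 n x₁ x₂ - α * cosKer P12 n x₁ x₂ +
          deriv (deriv (fun y => cosKer P22 n x₁ y)) x₂ + cosKer Q12 n x₁ x₂ =
        γ ^ 2 * cosKer P22 n x₁ 1 * cosKer P12 n 1 x₂) ∧
      (cosKer P12 n x₁ x₂ + cosKer P12 n x₁ x₂ - 2 * α * cosKer P22 n x₁ x₂ +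
          cosKer Q22 n x₁ x₂ =
        γ ^ 2 * cosKer P22 n x₁ 1 * cosKer P22 n 1 x₂)) := by
  constructor
  · intro c x₁ x₂
    constructor
    · rintro (rfl | rfl)
      · exact_mod_cast deriv_cosKer_left_intCast c n x₂ 0
      · exact_mod_cast deriv_cosKer_left_intCast c n x₂ 1
    · rintro (rfl | rfl)
      · exact_mod_cast deriv_cosKer_right_intCast c n x₁ 0
      · exact_mod_cast deriv_cosKer_right_intCast c n x₁ 1
  · intro x₁ x₂
    have trace_mul (a b : ℝ) : cosKer a n x₁ 1 * cosKer b n 1 x₂ = cosKer (a * b) n x₁ x₂ :=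
      mod_cast cosKer_intCast_mul_cosKer_intCast n x₁ x₂ a b 1
    obtain ⟨mode, cosKer_eq_mul_mode⟩ : ∃ mode, ∀ a, cosKer a n x₁ x₂ = a * mode :=
      ⟨_, fun _ => mul_assoc _ _ _⟩
    simp only [deriv_deriv_cosKer_left, deriv_deriv_cosKer_right, mul_assoc (γ ^ 2), trace_mul,
      cosKer_eq_mul_mode]
    refine ⟨?_, ?_, ?_, ?_⟩
    · linear_combination -mode * h1
    · linear_combination -mode * h2
    · linear_combination -mode * h2
    · linear_combination -mode * h3

/-- If `(P₁₁, P₁₂, P₂₂)` solves the `n`-th Neumann algebraic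
Riccati equations, then the single-mode kernel
`P(x₁,x₂) = [[P₁₁,P₁₂],[P₁₂,P₂₂]] cos(nπx₁) cos(nπx₂)` satisfies the Neumann
boundary conditions and the four Neumann Riccati partial differential equations
with weight kernel `Q(x₁,x₂) = [[Q₁₁,Q₁₂],[Q₁₂,Q₂₂]] cos(nπx₁) cos(nπx₂)`. -/
theorem neumann_riccati_pde_single_mode
    (n : ℕ) (α γ P11 P12 P22 Q11 Q12 Q22 : ℝ) (hα : 0 ≤ α)
    (h1 : 0 = -2 * (n : ℝ) ^ 2 * Real.pi ^ 2 * P12 + Q11 - γ ^ 2 * P12 ^ 2)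
    (h2 : 0 = P11 - α * P12 - (n : ℝ) ^ 2 * Real.pi ^ 2 * P22 + Q12 - γ ^ 2 * P12 * P22)
    (h3 : 0 = 2 * P12 - 2 * α * P22 + Q22 - γ ^ 2 * P22 ^ 2) :
    -- Neumann boundary conditions on the kernel P: ∂P/∂x₁ vanishes at x₁ ∈ {0,1},
    -- ∂P/∂x₂ vanishes at x₂ ∈ {0,1}, entrywise
    (∀ c ∈ ({P11, P12, P22} : Set ℝ), ∀ x₁ x₂ : ℝ,
      ((x₁ = 0 ∨ x₁ = 1) → deriv (fun y => cosKer c n y x₂) x₁ = 0) ∧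
      ((x₂ = 0 ∨ x₂ = 1) → deriv (fun y => cosKer c n x₁ y) x₂ = 0)) ∧
    -- the four Neumann Riccati PDEs
    (∀ x₁ ∈ Set.Icc (0 : ℝ) 1, ∀ x₂ ∈ Set.Icc (0 : ℝ) 1,
      -- (i)
      (deriv (deriv (fun y => cosKer P12 n y x₂)) x₁ +
          deriv (deriv (fun y => cosKer P12 n x₁ y)) x₂ + cosKer Q11 n x₁ x₂ =
        γ ^ 2 * cosKer P12 n x₁ 1 * cosKer P12 n 1 x₂) ∧
      -- (ii)
      (cosKer P11 n x₁ x₂ - α * cosKer P12 n x₁ x₂ +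
          deriv (deriv (fun y => cosKer P22 n y x₂)) x₁ + cosKer Q12 n x₁ x₂ =
        γ ^ 2 * cosKer P12 n x₁ 1 * cosKer P22 n 1 x₂) ∧
      -- (iii)
      (cosKer P11 n x₁ x₂ - α * cosKer P12 n x₁ x₂ +
          deriv (deriv (fun y => cosKer P22 n x₁ y)) x₂ + cosKer Q12 n x₁ x₂ =
        γ ^ 2 * cosKer P22 n x₁ 1 * cosKer P12 n 1 x₂) ∧
      -- (iv)
      (cosKer P12 n x₁ x₂ + cosKer P12 n x₁ x₂ - 2 * α * cosKer P22 n x₁ x₂ +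
          cosKer Q22 n x₁ x₂ =
        γ ^ 2 * cosKer P22 n x₁ 1 * cosKer P22 n 1 x₂)) := by
  obtain ⟨boundary, riccati⟩ := neumann_riccati_pde_single_mode_general n α γ _ _ _ _ _ _ h1 h2 h3
  exact ⟨fun c _ => boundary c, fun x₁ _ x₂ _ => riccati x₁ x₂⟩
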